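/- arXiv:2402.14746 — 2 statements merged into one kernel-verified Lean document; each statement's English description precedes it below -/
import Mathlib

section
/- For every δ ∈ (0,1), with probability at least 1 − δ, simultaneously for all functions f : S → Y, |Ĉ(f) − C(f)| ≤ λ·√((|S|·log|Y| + log(2/δ)) / (2·n)). -/
open MeasureTheory Finset

/-- The finite mixture of Dirac masses given by the mass function `p`. -/
noncomputable def ucedLaw {T : Type*} [Fintype T] [MeasurableSpace T] (p : T → ℝ) : Measure T :=
  ∑ s, ENNReal.ofReal (p s) • Measure.dirac s

lemma ucedLaw_prob {T : Type*} [Fintype T] [MeasurableSpace T] (p : T → ℝ)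
    (hp : ∀ s, 0 ≤ p s) (hsum : ∑ s, p s = 1) : IsProbabilityMeasure (ucedLaw p) := by
  constructor
  simp only [ucedLaw, Measure.coe_finsetSum, Finset.sum_apply, Measure.smul_apply,
    measure_univ, smul_eq_mul, mul_one]
  rw [← ENNReal.ofReal_sum_of_nonneg (fun i _ => hp i), hsum, ENNReal.ofReal_one]

lemma ucedLaw_integral {T : Type*} [Fintype T] [MeasurableSpace T] [MeasurableSingletonClass T]
    (p : T → ℝ) (hp : ∀ s, 0 ≤ p s) (g : T → ℝ) :
    ∫ x, g x ∂(ucedLaw p) = ∑ s, p s * g s := by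
  unfold ucedLaw
  rw [integral_finsetSum_measure]
  · refine Finset.sum_congr rfl fun s _ => ?_
    rw [integral_smul_measure, integral_dirac, ENNReal.toReal_ofReal (hp s), smul_eq_mul]
  · intro i _
    exact (integrable_dirac (by simp [enorm_lt_top])).smul_measure ENNReal.ofReal_ne_top

lemma ucedLaw_map {T S : Type*} [Fintype T] [Fintype S] [MeasurableSpace T] [MeasurableSpace S]
    (e : T ≃ S) (he : Measurable e) (p : S → ℝ) :
    (ucedLaw (fun t => p (e t))).map e = ucedLaw p := by
  ext A hA
  rw [Measure.map_apply he hA]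
  simp only [ucedLaw, Measure.coe_finsetSum, Finset.sum_apply, Measure.smul_apply, smul_eq_mul]
  rw [← Equiv.sum_comp e]
  refine Finset.sum_congr rfl fun t _ => ?_
  rw [Measure.dirac_apply' _ hA, Measure.dirac_apply' _ (he hA)]
  rfl

/-- One-sided Hoeffding bound. -/
lemma uced_hoeffding {T : Type*} [Fintype T] [MeasurableSpace T] [MeasurableSingletonClass T]
    (p : T → ℝ) (hp : ∀ s, 0 ≤ p s) (hsum : ∑ s, p s = 1) (g : T → ℝ) (a lam : ℝ)
    (hg : ∀ s, g s ∈ Set.Icc a (a + lam)) (n : ℕ) (ε : ℝ) (hε : 0 ≤ ε) :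
    (Measure.pi (fun _ : Fin n => ucedLaw p)).real
      {ω | ε ≤ ∑ i, (g (ω i) - ∑ s, p s * g s)} ≤ Real.exp (-ε ^ 2 / (2 * (n * (lam / 2) ^ 2))) := by
  have := ucedLaw_prob p hp hsum
  have hm : Measurable g := measurable_of_finite g
  have h1 := ProbabilityTheory.hasSubgaussianMGF_of_mem_Icc (μ := ucedLaw p) (X := g)
    hm.aemeasurable (Filter.Eventually.of_forall hg)
  rw [ucedLaw_integral p hp g] at h1
  have hind := ProbabilityTheory.iIndepFun_pi (μ := fun _ : Fin n => ucedLaw p)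
    (X := fun _ ω => g ω - ∑ s, p s * g s) (fun _ => (hm.sub_const _).aemeasurable)
  have h2 : ∀ i ∈ (Finset.univ : Finset (Fin n)),
      ProbabilityTheory.HasSubgaussianMGF (fun ω : Fin n → T => g (ω i) - ∑ s, p s * g s)
        ((‖a + lam - a‖₊ / 2) ^ 2) (Measure.pi (fun _ : Fin n => ucedLaw p)) := by
    intro i _
    have hmp := measurePreserving_eval (fun _ : Fin n => ucedLaw p) i
    rw [← hmp.map_eq] at h1
    exact h1.of_map hmp.measurable.aemeasurable
  have h3 := ProbabilityTheory.HasSubgaussianMGF.measure_sum_ge_le_of_iIndepFun hind h2 hε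
  refine h3.trans (le_of_eq ?_)
  congr 3
  simp [div_pow]

/-- Uniform bound on a discrete space. -/
lemma uced_discrete {T : Type*} [Fintype T] [MeasurableSpace T] [MeasurableSingletonClass T]
    (Y : Finset ℝ) (hY : ∀ y ∈ Y, 0 < y ∧ y ≤ 1) (hYcard : 2 ≤ Y.card)
    (lam : ℝ) (hlam : 0 < lam)
    (hlog : ∀ y ∈ Y, |Real.log y| ≤ lam)
    (p : T → ℝ) (hp : ∀ s, 0 ≤ p s) (hpsum : ∑ s, p s = 1)
    (n : ℕ) (hn : 0 < n) (δ : ℝ) (hδ0 : 0 < δ) (hδ1 : δ < 1) :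
    ENNReal.ofReal (1 - δ) ≤
      (Measure.pi (fun _ : Fin n => ucedLaw p))
        {ω : Fin n → T | ∀ f : T → ℝ, (∀ s, f s ∈ Y) →
          |(-((1 : ℝ) / n) * ∑ i, Real.log (f (ω i))) -
            (-(∑ s, p s * Real.log (f s)))| ≤
          lam * Real.sqrt
            (((Fintype.card T : ℝ) * Real.log (Y.card) + Real.log (2 / δ)) / (2 * n))} := by
  classical
  have := ucedLaw_prob p hp hpsum
  set μ := Measure.pi (fun _ : Fin n => ucedLaw p) with hμ
  set L := (Fintype.card T : ℝ) * Real.log (Y.card) + Real.log (2 / δ) with hL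
  set ε := lam * Real.sqrt (L / (2 * n)) with hεdef
  have hn' : (0 : ℝ) < n := by exact_mod_cast hn
  have hYpos : (0 : ℝ) < Y.card := by exact_mod_cast (by omega : 0 < Y.card)
  have hL0 : 0 ≤ L := by
    have h1 : 0 ≤ Real.log (Y.card : ℝ) := Real.log_natCast_nonneg _
    have h2 : 0 ≤ Real.log (2 / δ) := Real.log_nonneg (by rw [le_div_iff₀ hδ0]; linarith)
    positivity
  have hε : 0 ≤ ε := by positivity
  have hexp : Real.exp (-(n * ε) ^ 2 / (2 * (n * (lam / 2) ^ 2)))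
      = δ / 2 / (Y.card : ℝ) ^ Fintype.card T := by
    have : -(n * ε) ^ 2 / (2 * (n * (lam / 2) ^ 2)) = -L := by
      rw [hεdef, mul_pow, mul_pow, Real.sq_sqrt (by positivity)]
      field_simp
    rw [this, hL, neg_add, Real.exp_add, Real.exp_neg, Real.exp_neg, Real.exp_log (by positivity),
      Real.exp_nat_mul, Real.exp_log hYpos]
    field_simp
  set A : (T → ℝ) → Set (Fin n → T) := fun f =>
    {ω | n * ε ≤ ∑ i, (Real.log (f (ω i)) - ∑ s, p s * Real.log (f s))} ∪
    {ω | n * ε ≤ ∑ i, (-Real.log (f (ω i)) - ∑ s, p s * -Real.log (f s))} with hA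
  have hAle : ∀ f ∈ Fintype.piFinset (fun _ : T => Y),
      μ.real (A f) ≤ δ / (Y.card : ℝ) ^ Fintype.card T := by
    intro f hf
    rw [Fintype.mem_piFinset] at hf
    have hb : ∀ s, -lam ≤ Real.log (f s) ∧ Real.log (f s) ≤ 0 := fun s =>
      ⟨(abs_le.1 (hlog _ (hf s))).1, Real.log_nonpos (hY _ (hf s)).1.le (hY _ (hf s)).2⟩
    have h1 := uced_hoeffding p hp hpsum (fun s => Real.log (f s)) (-lam) lam
      (fun s => ⟨(hb s).1, by linarith [(hb s).2]⟩) n (n * ε) (by positivity)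
    have h2 := uced_hoeffding p hp hpsum (fun s => -Real.log (f s)) 0 lam
      (fun s => ⟨by linarith [(hb s).2], by linarith [(hb s).1]⟩) n (n * ε) (by positivity)
    rw [hexp] at h1 h2
    refine (measureReal_union_le _ _).trans ((add_le_add h1 h2).trans (le_of_eq ?_))
    ring
  set B := ⋃ f ∈ Fintype.piFinset (fun _ : T => Y), A f with hB
  have hBle : μ.real B ≤ δ := by
    refine (measureReal_biUnion_finset_le _ _).trans ((Finset.sum_le_sum hAle).trans (le_of_eq ?_))
    rw [Finset.sum_const, Fintype.card_piFinset, Finset.prod_const, Finset.card_univ, nsmul_eq_mul]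
    push_cast
    field_simp
  have hBm : MeasurableSet B := Set.Finite.measurableSet (Set.toFinite _)
  have hc : 1 - δ ≤ μ.real Bᶜ := by
    rw [probReal_compl_eq_one_sub hBm]
    linarith
  calc ENNReal.ofReal (1 - δ) ≤ ENNReal.ofReal (μ.real Bᶜ) := ENNReal.ofReal_le_ofReal hc
    _ = μ Bᶜ := ofReal_measureReal
    _ ≤ _ := by
      refine measure_mono fun ω hω f hf => ?_
      have hω' : ω ∉ A f := fun h => hω (by
        rw [hB]
        exact Set.mem_biUnion (Fintype.mem_piFinset.2 hf : f ∈ (Fintype.piFinset _ : Finset _)) h)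
      rw [hA] at hω'
      simp only [Set.mem_union, Set.mem_ofPred_eq, not_or, not_le, Finset.sum_sub_distrib,
        Finset.sum_neg_distrib, mul_neg, Finset.sum_const, Finset.card_univ, Fintype.card_fin,
        nsmul_eq_mul] at hω'
      obtain ⟨h1, h2⟩ := hω'
      set a := ∑ i, Real.log (f (ω i))
      set b := ∑ s, p s * Real.log (f s)
      have hab : -((1 : ℝ) / n) * a - -b = (n * b - a) / n := by field_simp; ring
      rw [hab, abs_le, le_div_iff₀ hn', div_le_iff₀ hn']
      constructor <;> linarith

/-- uniform deviation bound, key step of Theorem 1(a).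
With the setup of Statements 0–1 and `|Y| ≥ 2`, for every `δ ∈ (0,1)`, with probability
at least `1 - δ` over the `n` i.i.d. training draws, simultaneously for all LLMs
`f : S → Y`,
`|Ĉ(f) - C(f)| ≤ lam * √((|S| log |Y| + log (2/δ)) / (2 n))`. -/
theorem uniform_cross_entropy_deviation
    {S : Type*} [Fintype S] [Nonempty S] [MeasurableSpace S]
    (Y : Finset ℝ) (hY : ∀ y ∈ Y, 0 < y ∧ y ≤ 1) (hYcard : 2 ≤ Y.card)
    (lam : ℝ) (hlam : 0 < lam)
    (hlog : ∀ y ∈ Y, |Real.log y| ≤ lam)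
    (hratio : ∀ a ∈ Y, ∀ b ∈ Y, |Real.log (a / b)| ≤ lam)
    (p : S → ℝ) (hpY : ∀ s, p s ∈ Y) (hpsum : ∑ s, p s = 1)
    (n : ℕ) (hn : 0 < n) (δ : ℝ) (hδ0 : 0 < δ) (hδ1 : δ < 1) :
    ENNReal.ofReal (1 - δ) ≤
      (Measure.pi (fun _ : Fin n => ∑ s, ENNReal.ofReal (p s) • Measure.dirac s))
        {ω : Fin n → S | ∀ f : S → ℝ, (∀ s, f s ∈ Y) →
          |(-((1 : ℝ) / n) * ∑ i, Real.log (f (ω i))) -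
            (-(∑ s, p s * Real.log (f s)))| ≤
          lam * Real.sqrt
            (((Fintype.card S : ℝ) * Real.log (Y.card) + Real.log (2 / δ)) / (2 * n))} := by
  let e : Fin (Fintype.card S) ≃ S := (Fintype.equivFin S).symm
  have he : Measurable e := measurable_from_top
  have hp0 : ∀ s, 0 ≤ p s := fun s => (hY _ (hpY s)).1.le
  have hsum : ∑ t, p (e t) = 1 := by rw [Equiv.sum_comp e p, hpsum]
  have := ucedLaw_prob (fun t => p (e t)) (fun t => hp0 _) hsum
  have := ucedLaw_prob p hp0 hpsum
  have key := uced_discrete Y hY hYcard lam hlam hlog (fun t => p (e t)) (fun t => hp0 _) hsum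
    n hn δ hδ0 hδ1
  have hmap : (Measure.pi (fun _ : Fin n => ucedLaw (fun t => p (e t)))).map
      (fun ω i => e (ω i)) = Measure.pi (fun _ : Fin n => ucedLaw p) := by
    have : ∀ _ : Fin n, SigmaFinite ((ucedLaw (fun t => p (e t))).map e) := by
      intro _
      rw [ucedLaw_map e he p]
      infer_instance
    rw [Measure.pi_map_pi (fun _ => he.aemeasurable)]
    simp only [ucedLaw_map e he p]
  change _ ≤ (Measure.pi (fun _ : Fin n => ucedLaw p)) _
  rw [← hmap]
  refine key.trans (le_trans (measure_mono ?_) (Measure.le_map_apply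
    (measurable_pi_lambda _ fun i => he.comp (measurable_pi_apply i)).aemeasurable _))
  intro ω hω f hf
  have h := hω (fun t => f (e t)) (fun t => hf _)
  rw [Equiv.sum_comp e (fun s => p s * Real.log (f s)), Fintype.card_fin] at h
  exact h
end

section
/- Let ĝ : S → Y be any minimizer over the class F of all functions S → Y of the empirical cross-entropy Ĉ (empirical risk minimization). Then for every δ ∈ (0,1), with probability at least 1 − δ, L(ĝ) ≤ min_{h : S → Y} L(h) + 2·λ·√((|S|·log|Y| + log(2/δ)) / (2·n)); in particular, the excess risk of empirical risk minimization is O(√(|S|/n)). -/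
open MeasureTheory Finset

lemma erm_pi_map_le {T S : Type*} [Fintype T] [MeasurableSpace T] [MeasurableSpace S] (n : ℕ)
    (e : T → S) (he : Measurable e) (p : T → ℝ) (A : Set (Fin n → S)) :
    (Measure.pi (fun _ : Fin n => ∑ t, ENNReal.ofReal (p t) • Measure.dirac t))
      ((fun (ω : Fin n → T) i => e (ω i)) ⁻¹' A) ≤
    (Measure.pi (fun _ : Fin n => ∑ t, ENNReal.ofReal (p t) • Measure.dirac (e t))) A := by
  have h1 : (∑ t, ENNReal.ofReal (p t) • Measure.dirac t : Measure T).map e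
      = ∑ t, ENNReal.ofReal (p t) • Measure.dirac (e t) := by
    rw [Measure.map_finset_sum he.aemeasurable]
    refine Finset.sum_congr rfl fun t _ => ?_
    rw [Measure.map_smul, Measure.map_dirac' he]
  have hfin : IsFiniteMeasure (∑ t, ENNReal.ofReal (p t) • Measure.dirac t : Measure T) := by
    constructor
    simp [Measure.finsetSum_apply]
  have h2 := Measure.pi_map_pi (ι := Fin n)
    (μ := fun _ => (∑ t, ENNReal.ofReal (p t) • Measure.dirac t : Measure T))
    (f := fun _ => e) (fun _ => he.aemeasurable)
  simp only [h1] at h2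
  rw [← h2]
  exact Measure.le_map_apply (measurable_pi_lambda _ fun i => he.comp (measurable_pi_apply i)).aemeasurable A

lemma erm_hoeffding {T : Type*} [MeasurableSpace T]
    (μ : Measure T) [IsProbabilityMeasure μ] (Z : T → ℝ) (hZ : Measurable Z) (lam : ℝ)
    (hlam : 0 < lam) (hb : ∀ t, Z t ∈ Set.Icc 0 lam) (n : ℕ) (hn : 0 < n) (ε : ℝ) (hε : 0 ≤ ε) :
    (Measure.pi (fun _ : Fin n => μ)).real
      {ω | n * ε ≤ ∑ i, -(Z (ω i) - ∫ t, Z t ∂μ)} ≤ Real.exp (-(2 * n * ε ^ 2 / lam ^ 2)) := by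
  have h := (ProbabilityTheory.hasSubgaussianMGF_of_mem_Icc (μ := μ) hZ.aemeasurable
    (Filter.Eventually.of_forall hb)).neg
  have hind := ProbabilityTheory.iIndepFun_pi (ι := Fin n) (μ := fun _ => μ)
    (X := fun _ => fun t => -(Z t - ∫ t, Z t ∂μ)) (fun _ => by fun_prop)
  have hsub : ∀ i ∈ (Finset.univ : Finset (Fin n)), ProbabilityTheory.HasSubgaussianMGF
      (fun ω : Fin n → T => -(Z (ω i) - ∫ t, Z t ∂μ)) ((‖lam - 0‖₊ / 2) ^ 2)
      (Measure.pi (fun _ : Fin n => μ)) := by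
    intro i _
    have hm := (measurePreserving_eval (fun _ : Fin n => μ) i)
    rw [← hm.map_eq] at h
    have := h.of_map hm.measurable.aemeasurable
    rw [hm.map_eq] at this
    exact this
  have := ProbabilityTheory.HasSubgaussianMGF.measure_sum_ge_le_of_iIndepFun hind hsub
    (ε := n * ε) (by positivity)
  refine this.trans (Real.exp_le_exp.2 (le_of_eq ?_))
  have hn' : (n : ℝ) ≠ 0 := by positivity
  simp [abs_of_pos hlam]
  field_simp

lemma erm_discrete
    {S : Type*} [Fintype S] [Nonempty S] [MeasurableSpace S] [DiscreteMeasurableSpace S]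
    (Y : Finset ℝ) (hY : ∀ y ∈ Y, 0 < y ∧ y ≤ 1) (hYcard : 2 ≤ Y.card)
    (lam : ℝ) (hlam : 0 < lam)
    (hratio : ∀ a ∈ Y, ∀ b ∈ Y, |Real.log (a / b)| ≤ lam)
    (p : S → ℝ) (hpY : ∀ s, p s ∈ Y) (hpsum : ∑ s, p s = 1)
    (n : ℕ) (hn : 0 < n)
    (g : (Fin n → S) → S → ℝ) (hgY : ∀ ω s, g ω s ∈ Y)
    (hgERM : ∀ ω : Fin n → S, ∀ h : S → ℝ, (∀ s, h s ∈ Y) →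
      -((1 : ℝ) / n) * ∑ i, Real.log (g ω (ω i)) ≤
        -((1 : ℝ) / n) * ∑ i, Real.log (h (ω i)))
    (δ : ℝ) (hδ0 : 0 < δ) (hδ1 : δ < 1) :
    ENNReal.ofReal (1 - δ) ≤
      (Measure.pi (fun _ : Fin n => ∑ s, ENNReal.ofReal (p s) • Measure.dirac s))
        {ω : Fin n → S | ∀ h : S → ℝ, (∀ s, h s ∈ Y) →
          ∑ s, p s * Real.log (p s / g ω s) ≤
            (∑ s, p s * Real.log (p s / h s)) +
              2 * lam * Real.sqrt
                (((Fintype.card S : ℝ) * Real.log (Y.card) + Real.log (2 / δ)) /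
                  (2 * n))} := by
  classical
  have hp0 : ∀ s, 0 < p s := fun s => (hY _ (hpY s)).1
  have hYne : Y.Nonempty := Finset.card_pos.1 (by omega)
  obtain ⟨M, hMY, hM⟩ := Y.exists_max_image id hYne
  simp only [id] at hM
  have hM0 := (hY M hMY).1
  have hn' : (0 : ℝ) < n := by exact_mod_cast hn
  set μ : Measure S := ∑ s, ENNReal.ofReal (p s) • Measure.dirac s with hμ
  have hprob : IsProbabilityMeasure μ := by
    constructor
    simp only [hμ, Measure.finsetSum_apply, Measure.smul_apply, measure_univ, smul_eq_mul, mul_one]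
    rw [← ENNReal.ofReal_sum_of_nonneg (fun s _ => (hp0 s).le), hpsum, ENNReal.ofReal_one]
  have hint : ∀ Z : S → ℝ, ∫ t, Z t ∂μ = ∑ s, p s * Z s := by
    intro Z
    rw [hμ, integral_finsetSum_measure (fun i _ => Integrable.of_finite.smul_measure (by simp))]
    refine Finset.sum_congr rfl fun s _ => ?_
    rw [integral_smul_measure, integral_dirac, ENNReal.toReal_ofReal (hp0 s).le, smul_eq_mul]
  set P := Measure.pi (fun _ : Fin n => μ) with hP
  set Q : ℝ := (Fintype.card S : ℝ) * Real.log (Y.card) + Real.log (2 / δ) with hQ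
  have hYc1 : (1 : ℝ) ≤ Y.card := by exact_mod_cast (by omega : 1 ≤ Y.card)
  have hQ0 : 0 ≤ Q := by
    have h1 := Real.log_nonneg hYc1
    have h2 : 0 ≤ Real.log (2 / δ) := Real.log_nonneg (by rw [le_div_iff₀ hδ0]; linarith)
    positivity
  set ε := lam * Real.sqrt (Q / (2 * n)) with hε
  have hε0 : 0 ≤ ε := by positivity
  let F : Finset (S → ℝ) := Fintype.piFinset (fun _ => Y)
  let Bad : (S → ℝ) → Set (Fin n → S) := fun f =>
    {ω | n * ε ≤ ∑ i, -(Real.log (M / f (ω i)) - ∫ t, Real.log (M / f t) ∂μ)}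
  have hexp : Real.exp (-(2 * n * ε ^ 2 / lam ^ 2)) = ((Y.card : ℝ) ^ Fintype.card S)⁻¹ * (δ / 2) := by
    have : 2 * n * ε ^ 2 / lam ^ 2 = Q := by
      rw [hε, mul_pow, Real.sq_sqrt (by positivity)]
      field_simp
    rw [this, hQ, ← Real.log_pow, Real.exp_neg, Real.exp_add, Real.exp_log (by positivity),
      Real.exp_log (by positivity)]
    rw [mul_inv, inv_div]
  have hBad : ∀ f ∈ F, P.real (Bad f) ≤ ((Y.card : ℝ) ^ Fintype.card S)⁻¹ * (δ / 2) := by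
    intro f hf
    have hf' : ∀ s, f s ∈ Y := by simpa [F] using hf
    rw [← hexp]
    refine erm_hoeffding μ (fun s => Real.log (M / f s)) (Measurable.of_discrete) lam hlam ?_ n hn
      ε hε0
    intro t
    refine ⟨Real.log_nonneg ?_, (le_abs_self _).trans (hratio _ hMY _ (hf' t))⟩
    rw [one_le_div (hY _ (hf' t)).1]
    exact hM _ (hf' t)
  have hU : P.real (⋃ f ∈ F, Bad f) ≤ δ := by
    refine (measureReal_biUnion_finset_le F Bad).trans ?_
    refine (Finset.sum_le_sum hBad).trans ?_
    have : (F.card : ℝ) = (Y.card : ℝ) ^ Fintype.card S := by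
      simp [F, Fintype.card_piFinset]
    rw [Finset.sum_const, nsmul_eq_mul, this, ← mul_assoc, mul_inv_cancel₀ (by positivity)]
    linarith
  have hC : ENNReal.ofReal (1 - δ) ≤ P (⋃ f ∈ F, Bad f)ᶜ := by
    rw [← ofReal_measureReal, measureReal_compl (Set.toFinite _).measurableSet]
    apply ENNReal.ofReal_le_ofReal
    simp only [probReal_univ]
    linarith
  refine hC.trans (measure_mono ?_)
  intro ω hω h hh
  have hgF : g ω ∈ F := by simpa [F] using hgY ω
  have hgood : ¬ (n * ε ≤ ∑ i, -(Real.log (M / g ω (ω i)) - ∫ t, Real.log (M / g ω t) ∂μ)) := by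
    intro hbad
    exact hω (Set.mem_biUnion hgF hbad)
  push Not at hgood
  have hldiv : ∀ a ∈ Y, ∀ b ∈ Y, Real.log (a / b) = Real.log a - Real.log b := fun a ha b hb =>
    Real.log_div (hY a ha).1.ne' (hY b hb).1.ne'
  have hemp : ∑ i, Real.log (M / g ω (ω i)) ≤ 0 := by
    have h1 := hgERM ω (fun _ => M) (fun _ => hMY)
    simp only [neg_mul, neg_le_neg_iff] at h1
    have h2 := le_of_mul_le_mul_left h1 (by positivity)
    simp only [hldiv M hMY _ (hgY _ _), Finset.sum_sub_distrib]
    linarith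
  have hE : ∑ s, p s * Real.log (M / g ω s) < ε := by
    rw [Finset.sum_neg_distrib, Finset.sum_sub_distrib, hint] at hgood
    simp only [Finset.sum_const, Finset.card_univ, Fintype.card_fin, nsmul_eq_mul] at hgood
    have : n * ∑ s, p s * Real.log (M / g ω s) < n * ε := by linarith
    exact lt_of_mul_lt_mul_left this hn'.le
  have hcmp : ∑ s, p s * Real.log (p s / g ω s) ≤ (∑ s, p s * Real.log (p s / h s)) +
      ∑ s, p s * Real.log (M / g ω s) := by
    rw [← Finset.sum_add_distrib]
    refine Finset.sum_le_sum fun s _ => ?_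
    rw [← mul_add]
    refine mul_le_mul_of_nonneg_left ?_ (hp0 s).le
    rw [hldiv _ (hpY s) _ (hgY ω s), hldiv _ (hpY s) _ (hh s), hldiv _ hMY _ (hgY ω s)]
    have := Real.log_le_log (hY _ (hh s)).1 (hM _ (hh s))
    linarith
  have : 2 * lam * Real.sqrt (Q / (2 * n)) = 2 * ε := by rw [hε]; ring
  rw [this]
  linarith

/-- Theorem 1(a) with explicit constants: excess risk of ERM.
With the setup of Statement 2, let `g` be an empirical risk minimizer: for each training
sample `ω`, `g ω : S → Y` minimizes the empirical cross-entropy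
`Ĉ(h)(ω) = -(1/n) ∑ i, log h(ω i)` over all `h : S → Y`.  Then for every `δ ∈ (0,1)`,
with probability at least `1 - δ`, the Kullback–Leibler loss
`L(h) = ∑ s, p s * log (p s / h s)` of `g ω` exceeds the minimum loss over the class by at
most `2 lam √((|S| log |Y| + log (2/δ)) / (2 n))`. -/
theorem erm_excess_risk
    {S : Type*} [Fintype S] [Nonempty S] [MeasurableSpace S]
    (Y : Finset ℝ) (hY : ∀ y ∈ Y, 0 < y ∧ y ≤ 1) (hYcard : 2 ≤ Y.card)
    (lam : ℝ) (hlam : 0 < lam)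
    (hlog : ∀ y ∈ Y, |Real.log y| ≤ lam)
    (hratio : ∀ a ∈ Y, ∀ b ∈ Y, |Real.log (a / b)| ≤ lam)
    (p : S → ℝ) (hpY : ∀ s, p s ∈ Y) (hpsum : ∑ s, p s = 1)
    (n : ℕ) (hn : 0 < n)
    (g : (Fin n → S) → S → ℝ) (hgY : ∀ ω s, g ω s ∈ Y)
    (hgERM : ∀ ω : Fin n → S, ∀ h : S → ℝ, (∀ s, h s ∈ Y) →
      -((1 : ℝ) / n) * ∑ i, Real.log (g ω (ω i)) ≤
        -((1 : ℝ) / n) * ∑ i, Real.log (h (ω i)))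
    (δ : ℝ) (hδ0 : 0 < δ) (hδ1 : δ < 1) :
    ENNReal.ofReal (1 - δ) ≤
      (Measure.pi (fun _ : Fin n => ∑ s, ENNReal.ofReal (p s) • Measure.dirac s))
        {ω : Fin n → S | ∀ h : S → ℝ, (∀ s, h s ∈ Y) →
          ∑ s, p s * Real.log (p s / g ω s) ≤
            (∑ s, p s * Real.log (p s / h s)) +
              2 * lam * Real.sqrt
                (((Fintype.card S : ℝ) * Real.log (Y.card) + Real.log (2 / δ)) /
                  (2 * n))} := by
  have key := @erm_discrete S _ _ ⊤ (@DiscreteMeasurableSpace.mk S ⊤ (fun _ => trivial)) Y hY hYcard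
    lam hlam hratio p hpY hpsum n hn g hgY hgERM δ hδ0 hδ1
  refine key.trans ?_
  exact @erm_pi_map_le S S _ ⊤ _ n id (fun _ _ => trivial) p _
end
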